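/- arXiv:2002.09652 — 7 statements merged into one kernel-verified Lean document; each statement's English description precedes it below -/
import Mathlib

section
/- Let A be a positive semidefinite complex block matrix in M_m(M_n). Then (tr A)^{mn} + (det(tr₁ A))^m ≥ det A + (det(tr₂ A))^n, where tr₁ A = Σ_{i=1}^m A_{i,i} ∈ M_n is the first partial trace and tr₂ A = [tr A_{i,j}]_{i,j=1}^m ∈ M_m is the second partial trace. -/
open Matrix BigOperators ComplexOrder

/-!
Write `≤` for the Loewner order. For `A ≥ 0` one has
`tr₂ A ⊗ 1 + A ≤ (tr A) 1 + 1 ⊗ tr₁ A`: the difference of the two sides is the image of `Aᵀ` under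
the tensor product of `X ↦ (tr X) 1 - Xᵀ` and `Y ↦ (tr Y) 1 + Yᵀ`, which up to scaling has the
Kraus operators `(E_{kl} - E_{lk}) ⊗ (E_{pq} + E_{qp})`. Moreover `A` and
`tr₂ A ⊗ 1` are at most `(tr A) 1`.

The theorem is thus a case of: if `W, Z, Y ≥ 0`, `W ≤ T`, `Z ≤ T` and `W + Z ≤ T + Y`, then
`det W + det Z ≤ det T + det Y`. When `T` is singular, `W` and `Z` have determinant zero; otherwise
a congruence reduces to `T = 1`. If `det W + det Z ≤ 1` there is nothing to prove. If not, then
`W ≥ (det W) 1` and `Z ≥ (det Z) 1` give `W + Z - 1 ≥ 0`, and supermodularity of the determinant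
on the positive semidefinite cone gives `det W + det Z ≤ 1 + det (W + Z - 1) ≤ 1 + det Y`.
Supermodularity and monotonicity hold because adding a positive multiple of a rank-one projection
increases the determinant by that multiple of the determinant of a compression of the original
matrix.
-/

open scoped Kronecker MatrixOrder

section RankOneUpdate

variable {R ι : Type*} [CommRing R] [Fintype ι] [DecidableEq ι]

lemma adjugate_diag_eq_det_minor (M : Matrix ι ι R) (i : ι) :
    M.adjugate i i = (M.toSquareBlockProp (· ≠ i)).det := by
  rw [adjugate_apply, twoBlockTriangular_det _ (· ≠ i)]
  · have corner : ((M.updateRow i (Pi.single i 1)).toSquareBlockProp fun j => ¬j ≠ i) = 1 := by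
      ext ⟨a, ha⟩ ⟨b, hb⟩
      obtain rfl := not_ne_iff.mp ha
      obtain rfl := not_ne_iff.mp hb
      simp [toSquareBlockProp_def]
    rw [corner, det_one, mul_one]
    congr 1
    ext a b
    simp [toSquareBlockProp_def, a.2]
  · intro a ha b hb
    obtain rfl := not_ne_iff.mp ha
    simp [hb]

lemma det_add_single_diag (M : Matrix ι ι R) (i : ι) (c : R) :
    (M + single i i c).det = M.det + c * (M.toSquareBlockProp (· ≠ i)).det := by
  have row_update : M + single i i c = M.updateRow i (M i + c • Pi.single i 1) := by
    ext a b
    rcases eq_or_ne a i with rfl | ha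
    · simp [single_apply, Pi.single_apply, eq_comm]
    · simp [ha, ha.symm]
  rw [row_update, det_updateRow_add, det_updateRow_smul, updateRow_eq_self, ← adjugate_apply,
    adjugate_diag_eq_det_minor]

variable [StarRing R]

lemma det_star_mul_mul_unitary (U : unitaryGroup ι R) (M : Matrix ι ι R) :
    (star (U : Matrix ι ι R) * M * U).det = M.det := by
  rw [det_mul_right_comm, UnitaryGroup.star_mul_self, one_mul]

lemma det_add_unitary_conj_single (U : unitaryGroup ι R) (M : Matrix ι ι R) (i : ι) (c : R) :
    (M + U * single i i c * star (U : Matrix ι ι R)).det =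
      M.det + c * ((star (U : Matrix ι ι R) * M * U).toSquareBlockProp (· ≠ i)).det := by
  have conj : star (U : Matrix ι ι R) * (M + U * single i i c * star (U : Matrix ι ι R)) * U =
      star (U : Matrix ι ι R) * M * U + single i i c := by
    have cancel := UnitaryGroup.star_mul_self U
    simp only [mul_add, add_mul, ← mul_assoc, cancel, one_mul]
    rw [mul_assoc _ (star (U : Matrix ι ι R)), cancel, mul_one]
  rw [← det_star_mul_mul_unitary U, conj, det_add_single_diag, det_star_mul_mul_unitary]

end RankOneUpdate

section Loewner

variable {𝕜 ι : Type*} [RCLike 𝕜] {M N : Matrix ι ι 𝕜}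

lemma toSquareBlockProp_le_toSquareBlockProp (hMN : M ≤ N) (q : ι → Prop) :
    M.toSquareBlockProp q ≤ N.toSquareBlockProp q :=
  PosSemidef.submatrix (M := N - M) hMN Subtype.val

variable [Fintype ι] [DecidableEq ι]

lemma unitary_conj_single_nonneg (U : unitaryGroup ι 𝕜) (i : ι) {c : 𝕜} (hc : 0 ≤ c) :
    0 ≤ U * single i i c * star (U : Matrix ι ι 𝕜) := by
  have single_nonneg : (single i i c).PosSemidef :=
    diagonal_single i c ▸ .diagonal (Pi.single_nonneg.mpr hc)
  exact star_right_conjugate_nonneg single_nonneg.nonneg _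

theorem nonneg_matrix_induction {p : ∀ Q : Matrix ι ι 𝕜, 0 ≤ Q → Prop} (zero : p 0 le_rfl)
    (add : ∀ Q R hQ hR, p Q hQ → p R hR → p (Q + R) (add_nonneg hQ hR))
    (rank_one : ∀ (U : unitaryGroup ι 𝕜) (i : ι) (c : 𝕜) (hc : 0 ≤ c),
      p (U * single i i c * star (U : Matrix ι ι 𝕜)) (unitary_conj_single_nonneg U i hc))
    (Q : Matrix ι ι 𝕜) (hQ : 0 ≤ Q) : p Q hQ := by
  have hQ' := nonneg_iff_posSemidef.mp hQ
  let U := hQ'.isHermitian.eigenvectorUnitary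
  let d : ι → 𝕜 := RCLike.ofReal ∘ hQ'.isHermitian.eigenvalues
  have d_nonneg (i : ι) : 0 ≤ d i := RCLike.ofReal_nonneg.mpr (hQ'.eigenvalues_nonneg i)
  have decomposition :
      Q = ∑ i, (U : Matrix ι ι 𝕜) * single i i (d i) * star (U : Matrix ι ι 𝕜) := by
    rw [← Finset.sum_mul, ← Finset.mul_sum, sum_single_eq_diagonal]
    exact hQ'.isHermitian.spectral_theorem
  obtain ⟨_, hp⟩ := Finset.sum_induction _ (fun S => ∃ hS, p S hS)
    (fun S T ⟨hS, pS⟩ ⟨hT, pT⟩ => ⟨_, add S T hS hT pS pT⟩) ⟨le_rfl, zero⟩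
    fun i (_ : i ∈ Finset.univ) => ⟨_, rank_one U i _ (d_nonneg i)⟩
  simpa only [decomposition] using hp

lemma det_le_det_of_nonneg_of_le (hM : 0 ≤ M) (hMN : M ≤ N) : M.det ≤ N.det := by
  suffices increment : ∀ Q : Matrix ι ι 𝕜, 0 ≤ Q → ∀ M, 0 ≤ M → M.det ≤ (M + Q).det by
    simpa using increment (N - M) (sub_nonneg.mpr hMN) M hM
  intro Q hQ
  induction Q, hQ using nonneg_matrix_induction with
  | zero => simp
  | add Q R hQ _ ihQ ihR =>
    intro M hM
    rw [← add_assoc]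
    exact (ihQ M hM).trans (ihR (M + Q) (add_nonneg hM hQ))
  | rank_one U i c hc =>
    intro M hM
    rw [det_add_unitary_conj_single]
    have minor_nonneg := toSquareBlockProp_le_toSquareBlockProp
      (star_left_conjugate_nonneg hM (U : Matrix ι ι 𝕜)) (· ≠ i)
    exact le_add_of_nonneg_right
      (mul_nonneg hc (nonneg_iff_posSemidef.mp minor_nonneg).det_nonneg)

lemma det_add_sub_det_le_det_add_sub_det (hM : 0 ≤ M) (hMN : M ≤ N) {Q : Matrix ι ι 𝕜}
    (hQ : 0 ≤ Q) : (M + Q).det - M.det ≤ (N + Q).det - N.det := by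
  induction Q, hQ using nonneg_matrix_induction generalizing M N with
  | zero => simp
  | add Q R hQ _ ihQ ihR =>
    have increment_R := ihR (add_nonneg hM hQ) (add_le_add_left hMN Q)
    simpa only [← add_assoc, sub_add_sub_cancel] using add_le_add increment_R (ihQ hM hMN)
  | rank_one U i c hc =>
    simp only [det_add_unitary_conj_single, add_sub_cancel_left]
    have minor_nonneg := toSquareBlockProp_le_toSquareBlockProp
      (star_left_conjugate_nonneg hM (U : Matrix ι ι 𝕜)) (· ≠ i)
    have minor_le := toSquareBlockProp_le_toSquareBlockProp
      (star_left_conjugate_le_conjugate hMN (U : Matrix ι ι 𝕜)) (· ≠ i)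
    exact mul_le_mul_of_nonneg_left (det_le_det_of_nonneg_of_le minor_nonneg minor_le) hc

lemma det_smul_one_le (hM : 0 ≤ M) (hM1 : M ≤ 1) : M.det • (1 : Matrix ι ι 𝕜) ≤ M := by
  have hM' := nonneg_iff_posSemidef.mp hM
  let d := hM'.isHermitian.eigenvalues
  have d_le_one (i : ι) : d i ≤ 1 :=
    (CFC.le_one_iff (R := ℝ) M).mp hM1 _ (hM'.isHermitian.eigenvalues_mem_spectrum_real i)
  have det_le_eigenvalue (i : ι) : ∏ j, d j ≤ d i := by
    simpa using Finset.prod_le_prod_of_subset_of_le_one (Finset.subset_univ {i})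
      (fun j _ => hM'.eigenvalues_nonneg j) fun j _ _ => d_le_one j
  have scalar : M.det • (1 : Matrix ι ι 𝕜) = algebraMap ℝ _ (∏ i, d i) := by
    rw [hM'.isHermitian.det_eq_prod_eigenvalues, Algebra.algebraMap_eq_smul_one,
      RCLike.real_smul_eq_coe_smul (K := 𝕜), RCLike.ofReal_prod]
  rw [scalar, algebraMap_le_iff_le_spectrum, hM'.isHermitian.spectrum_real_eq_range_eigenvalues]
  simpa using det_le_eigenvalue

lemma le_trace_smul_one (hM : 0 ≤ M) : M ≤ M.trace • (1 : Matrix ι ι 𝕜) := by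
  have hM' := nonneg_iff_posSemidef.mp hM
  let d := hM'.isHermitian.eigenvalues
  have eigenvalue_le_trace (i : ι) : d i ≤ ∑ j, d j :=
    Finset.single_le_sum (fun j _ => hM'.eigenvalues_nonneg j) (Finset.mem_univ i)
  have scalar : M.trace • (1 : Matrix ι ι 𝕜) = algebraMap ℝ _ (∑ i, d i) := by
    rw [hM'.isHermitian.trace_eq_sum_eigenvalues, Algebra.algebraMap_eq_smul_one,
      RCLike.real_smul_eq_coe_smul (K := 𝕜), RCLike.ofReal_sum]
  rw [scalar, le_algebraMap_iff_spectrum_le, hM'.isHermitian.spectrum_real_eq_range_eigenvalues]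
  simpa using eigenvalue_le_trace

lemma det_add_det_le_one_add_det {W Z Y : Matrix ι ι 𝕜} (hW : 0 ≤ W) (hZ : 0 ≤ Z) (hY : 0 ≤ Y)
    (hW1 : W ≤ 1) (hZ1 : Z ≤ 1) (h : W + Z ≤ 1 + Y) : W.det + Z.det ≤ 1 + Y.det := by
  have det_nonneg {X : Matrix ι ι 𝕜} (hX : 0 ≤ X) : 0 ≤ X.det :=
    (nonneg_iff_posSemidef.mp hX).det_nonneg
  have det_sum_real := add_nonneg (det_nonneg hW) (det_nonneg hZ)
  obtain small | large : W.det + Z.det ≤ 1 ∨ 1 ≤ W.det + Z.det := by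
    obtain ⟨s, -, hs⟩ := RCLike.nonneg_iff_exists_ofReal.mp det_sum_real
    rw [← hs]
    exact_mod_cast le_total s 1
  · exact small.trans (le_add_of_nonneg_right (det_nonneg hY))
  have one_le_add : 1 ≤ W + Z := by
    calc (1 : Matrix ι ι 𝕜) ≤ (W.det + Z.det) • 1 := by
          rw [Matrix.le_iff, ← one_smul 𝕜 (1 : Matrix ι ι 𝕜), smul_smul, ← sub_smul, mul_one]
          exact PosSemidef.one.smul (sub_nonneg.mpr large)
      _ = W.det • 1 + Z.det • 1 := add_smul ..
      _ ≤ W + Z := add_le_add (det_smul_one_le hW hW1) (det_smul_one_le hZ hZ1)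
  have excess_nonneg : 0 ≤ W + Z - 1 := sub_nonneg.mpr one_le_add
  have excess_le_W : W + Z - 1 ≤ W := by simpa [add_sub_assoc] using hZ1
  have increment : Z.det - (W + Z - 1).det ≤ 1 - W.det := by
    have := det_add_sub_det_le_det_add_sub_det excess_nonneg excess_le_W (sub_nonneg.mpr hW1)
    rwa [show W + Z - 1 + (1 - W) = Z by abel, add_sub_cancel, det_one] at this
  calc W.det + Z.det ≤ 1 + (W + Z - 1).det := by
        rwa [sub_le_iff_le_add, sub_add_eq_add_sub, le_sub_iff_add_le'] at increment
    _ ≤ 1 + Y.det := add_le_add_right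
        (det_le_det_of_nonneg_of_le excess_nonneg (sub_le_iff_le_add'.mpr h)) 1

theorem det_add_det_le_det_add_det {T W Z Y : Matrix ι ι 𝕜} (hW : 0 ≤ W) (hZ : 0 ≤ Z) (hY : 0 ≤ Y)
    (hWT : W ≤ T) (hZT : Z ≤ T) (h : W + Z ≤ T + Y) : W.det + Z.det ≤ T.det + Y.det := by
  have hT : T.PosSemidef := nonneg_iff_posSemidef.mp (hW.trans hWT)
  by_cases singular : T.det = 0
  · have hW0 : W.det ≤ 0 := singular ▸ det_le_det_of_nonneg_of_le hW hWT
    have hZ0 : Z.det ≤ 0 := singular ▸ det_le_det_of_nonneg_of_le hZ hZT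
    rw [singular, zero_add]
    exact (add_nonpos hW0 hZ0).trans (nonneg_iff_posSemidef.mp hY).det_nonneg
  have hT' : IsStrictlyPositive T :=
    isStrictlyPositive_iff_posDef.mpr (hT.posDef_iff_det_ne_zero.mpr singular)
  obtain ⟨_, ⟨S, rfl⟩, rfl⟩ := CStarAlgebra.isStrictlyPositive_iff_eq_star_mul_self.mp hT'
  let R : Matrix ι ι 𝕜 := ↑S⁻¹
  have star_cancel : star R * star (S : Matrix ι ι 𝕜) = 1 := by
    rw [← star_mul, S.mul_inv, star_one]
  have conj_T : star R * (star (S : Matrix ι ι 𝕜) * S) * R = 1 := by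
    rw [← mul_assoc, star_cancel, one_mul, S.mul_inv]
  have det_conj (X : Matrix ι ι 𝕜) :
      X.det = (star (S : Matrix ι ι 𝕜) * S).det * (star R * X * R).det := by
    have := congrArg det conj_T
    simp only [det_mul, det_one] at this ⊢
    linear_combination -X.det * this
  have normalized := det_add_det_le_one_add_det (star_left_conjugate_nonneg hW R)
    (star_left_conjugate_nonneg hZ R) (star_left_conjugate_nonneg hY R)
    (conj_T ▸ star_left_conjugate_le_conjugate hWT R)
    (conj_T ▸ star_left_conjugate_le_conjugate hZT R)
    (by simpa only [mul_add, add_mul, conj_T] using star_left_conjugate_le_conjugate h R)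
  rw [det_conj W, det_conj Z, det_conj Y, ← mul_add, ← mul_one_add]
  exact mul_le_mul_of_nonneg_left normalized hT.det_nonneg

end Loewner

section PartialTrace

variable {R m n : Type*}

/-- The first partial trace `tr₁ A = ∑ₖ A_{k,k}` of a block matrix whose `(i, j)` block has the
entries `A (i, p) (j, q)`. -/
def partialTraceFst [AddCommMonoid R] [Fintype m] (A : Matrix (m × n) (m × n) R) : Matrix n n R :=
  of fun p q => ∑ k, A (k, p) (k, q)

/-- The second partial trace `tr₂ A = [tr A_{i,j}]` of a block matrix whose `(i, j)` block has the
entries `A (i, p) (j, q)`. -/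
def partialTraceSnd [AddCommMonoid R] [Fintype n] (A : Matrix (m × n) (m × n) R) : Matrix m m R :=
  of fun i j => ∑ r, A (i, r) (j, r)

lemma trace_partialTraceSnd [AddCommMonoid R] [Fintype m] [Fintype n]
    (A : Matrix (m × n) (m × n) R) : (partialTraceSnd A).trace = A.trace := by
  simp [partialTraceSnd, trace, Fintype.sum_prod_type]

section KrausOperators

variable [DecidableEq m] [DecidableEq n]

/-- The matrix `(E_{kl} - E_{lk}) ⊗ (E_{pq} + E_{qp})`, expanded in matrix units. Over all
indices these are Kraus operators for four times the tensor product of `X ↦ (tr X) 1 - Xᵀ` and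
`Y ↦ (tr Y) 1 + Yᵀ`. -/
def antisymmSymmUnit (R : Type*) [Ring R] (k l : m) (p q : n) : Matrix (m × n) (m × n) R :=
  single (k, p) (l, q) 1 + single (k, q) (l, p) 1 - single (l, p) (k, q) 1 - single (l, q) (k, p) 1

variable [Ring R]

lemma antisymmSymmUnit_swap_fst (k l : m) (p q : n) :
    antisymmSymmUnit R l k p q = -antisymmSymmUnit R k l p q := by
  simp only [antisymmSymmUnit]
  abel

lemma antisymmSymmUnit_swap_snd (k l : m) (p q : n) :
    antisymmSymmUnit R k l q p = antisymmSymmUnit R k l p q := by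
  simp only [antisymmSymmUnit]
  abel

lemma conjTranspose_antisymmSymmUnit [StarRing R] (k l : m) (p q : n) :
    (antisymmSymmUnit R k l p q)ᴴ = antisymmSymmUnit R l k q p := by
  simp only [antisymmSymmUnit, conjTranspose_sub, conjTranspose_add, conjTranspose_single, star_one]

variable [Fintype m] [Fintype n]

-- The right factor is `(antisymmSymmUnit R k l p q)ᴴ`, in a form that needs no involution on `R`.
lemma sum_single_mul_transpose_mul_antisymmSymmUnit (A : Matrix (m × n) (m × n) R) :
    ∑ k, ∑ l, ∑ p, ∑ q, single (k, p) (l, q) 1 * Aᵀ * antisymmSymmUnit R l k q p =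
      A.trace • 1 + 1 ⊗ₖ partialTraceFst A - (partialTraceSnd A ⊗ₖ 1 + A) := by
  simp only [antisymmSymmUnit, mul_add, mul_sub, single_mul_mul_single, one_mul, mul_one]
  ext ⟨a, b⟩ ⟨c, d⟩
  simp only [transpose_apply, Finset.sum_sub_distrib, Finset.sum_add_distrib, Matrix.sum_apply,
    Matrix.sub_apply, Matrix.add_apply, Matrix.smul_apply, single_apply, one_apply, trace,
    diag_apply, of_apply, kroneckerMap_apply, partialTraceFst, partialTraceSnd, Prod.mk.injEq,
    Fintype.sum_prod_type, Finset.sum_ite_irrel, Finset.sum_ite_eq', Finset.sum_const_zero,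
    Finset.mem_univ, ↓reduceIte, ite_and, smul_eq_mul, mul_ite, ite_mul, mul_one, one_mul,
    mul_zero, zero_mul]
  rw [Finset.sum_comm]
  abel

lemma sum_antisymmSymmUnit_conj_transpose [StarRing R] (A : Matrix (m × n) (m × n) R) :
    ∑ k, ∑ l, ∑ p, ∑ q, antisymmSymmUnit R k l p q * Aᵀ * (antisymmSymmUnit R k l p q)ᴴ =
      4 • (A.trace • 1 + 1 ⊗ₖ partialTraceFst A - (partialTraceSnd A ⊗ₖ 1 + A)) := by
  let summand (k l : m) (p q : n) : Matrix (m × n) (m × n) R :=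
    single (k, p) (l, q) 1 * Aᵀ * antisymmSymmUnit R l k q p
  have expand (k l : m) (p q : n) :
      antisymmSymmUnit R k l p q * Aᵀ * (antisymmSymmUnit R k l p q)ᴴ =
        summand k l p q + summand k l q p + summand l k p q + summand l k q p := by
    simp only [summand, conjTranspose_antisymmSymmUnit, antisymmSymmUnit_swap_fst k l,
      antisymmSymmUnit_swap_snd k l p q]
    nth_rw 1 [antisymmSymmUnit]
    simp only [add_mul, sub_mul, mul_neg]
    abel
  have swap_fst (f : m → m → n → n → Matrix (m × n) (m × n) R) :
      ∑ k, ∑ l, ∑ p, ∑ q, f l k p q = ∑ k, ∑ l, ∑ p, ∑ q, f k l p q := Finset.sum_comm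
  have swap_snd (f : m → m → n → n → Matrix (m × n) (m × n) R) :
      ∑ k, ∑ l, ∑ p, ∑ q, f k l q p = ∑ k, ∑ l, ∑ p, ∑ q, f k l p q :=
    Finset.sum_congr rfl fun k _ => Finset.sum_congr rfl fun l _ => Finset.sum_comm
  rw [← sum_single_mul_transpose_mul_antisymmSymmUnit]
  simp only [expand, Finset.sum_add_distrib]
  rw [swap_fst fun k l p q => summand k l q p, swap_fst summand, swap_snd summand]
  abel

end KrausOperators

variable {𝕜 : Type*} [RCLike 𝕜] {A : Matrix (m × n) (m × n) 𝕜}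

lemma partialTraceFst_posSemidef [Fintype m] (hA : A.PosSemidef) :
    (partialTraceFst A).PosSemidef := by
  have sum_blocks : partialTraceFst A = ∑ k, A.submatrix (k, ·) (k, ·) := by
    ext p q
    simp [partialTraceFst, Matrix.sum_apply]
  rw [sum_blocks]
  exact posSemidef_sum _ fun k _ => hA.submatrix (k, ·)

lemma partialTraceSnd_posSemidef [Fintype n] (hA : A.PosSemidef) :
    (partialTraceSnd A).PosSemidef := by
  have sum_blocks : partialTraceSnd A = ∑ r, A.submatrix (·, r) (·, r) := by
    ext i j
    simp [partialTraceSnd, Matrix.sum_apply]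
  rw [sum_blocks]
  exact posSemidef_sum _ fun r _ => hA.submatrix (·, r)

variable [Fintype m] [Fintype n] [DecidableEq m] [DecidableEq n]

lemma partialTraceSnd_kronecker_one_le (hA : A.PosSemidef) :
    partialTraceSnd A ⊗ₖ (1 : Matrix n n 𝕜) ≤ A.trace • 1 := by
  have factor_nonneg : (A.trace • 1 - partialTraceSnd A).PosSemidef := by
    rw [← trace_partialTraceSnd]
    exact le_trace_smul_one (partialTraceSnd_posSemidef hA).nonneg
  have difference : A.trace • 1 - partialTraceSnd A ⊗ₖ (1 : Matrix n n 𝕜) =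
      (A.trace • 1 - partialTraceSnd A) ⊗ₖ 1 := by
    rw [← one_kronecker_one, ← smul_kronecker, sub_eq_iff_eq_add, ← add_kronecker,
      sub_add_cancel]
  rw [Matrix.le_iff, difference]
  exact factor_nonneg.kronecker .one

theorem partialTraceSnd_kronecker_one_add_le (hA : A.PosSemidef) :
    partialTraceSnd A ⊗ₖ 1 + A ≤ A.trace • 1 + 1 ⊗ₖ partialTraceFst A := by
  rw [← sub_nonneg, ← smul_nonneg_iff_nonneg_of_pos_left (four_pos (α := ℝ)),
    ofNat_smul_eq_nsmul ℝ, ← sum_antisymmSymmUnit_conj_transpose]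
  refine Finset.sum_nonneg fun k _ => Finset.sum_nonneg fun l _ =>
    Finset.sum_nonneg fun p _ => Finset.sum_nonneg fun q _ => ?_
  exact (hA.transpose.mul_mul_conjTranspose_same _).nonneg

end PartialTrace

theorem trace_pow_add_det_trace1_ge_det_add_det_trace2_general {𝕜 m n : Type*} [RCLike 𝕜]
    [Fintype m] [Fintype n] [DecidableEq m] [DecidableEq n] {A : Matrix (m × n) (m × n) 𝕜}
    (hA : A.PosSemidef) :
    A.det + (partialTraceSnd A).det ^ Fintype.card n ≤
      A.trace ^ (Fintype.card m * Fintype.card n) + (partialTraceFst A).det ^ Fintype.card m := by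
  have hY : 0 ≤ (1 : Matrix m m 𝕜) ⊗ₖ partialTraceFst A :=
    (PosSemidef.one.kronecker (partialTraceFst_posSemidef hA)).nonneg
  have hZ : 0 ≤ partialTraceSnd A ⊗ₖ (1 : Matrix n n 𝕜) :=
    ((partialTraceSnd_posSemidef hA).kronecker .one).nonneg
  have key := det_add_det_le_det_add_det hA.nonneg hZ hY (le_trace_smul_one hA.nonneg)
    (partialTraceSnd_kronecker_one_le hA)
    (add_comm A _ ▸ partialTraceSnd_kronecker_one_add_le hA)
  simpa only [det_kronecker, det_smul, det_one, one_pow, one_mul, mul_one, Fintype.card_prod]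
    using key

lemma re_pow_of_nonneg {𝕜 : Type*} [RCLike 𝕜] {z : 𝕜} (hz : 0 ≤ z) (k : ℕ) :
    RCLike.re (z ^ k) = RCLike.re z ^ k := by
  obtain ⟨x, -, rfl⟩ := RCLike.nonneg_iff_exists_ofReal.mp hz
  rw [← RCLike.ofReal_pow, RCLike.ofReal_re, RCLike.ofReal_re]

/-- Inequality (7) of the paper: for a positive semidefinite block matrix `A ∈ M_m(M_n)`,
`(tr A)^{mn} + det(tr₁ A)^m ≥ det A + det(tr₂ A)^n`, where
`tr₁ A = ∑ᵢ A_{i,i}` and `tr₂ A = [tr A_{i,j}]`. -/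
theorem trace_pow_add_det_trace1_ge_det_add_det_trace2
    (m n : ℕ) (A : Matrix (Fin m × Fin n) (Fin m × Fin n) ℂ)
    (hA : A.PosSemidef) :
    A.det.re + ((Matrix.of fun i j : Fin m => ∑ r : Fin n, A (i, r) (j, r)).det.re) ^ n
      ≤ A.trace.re ^ (m * n)
        + ((Matrix.of fun p q : Fin n => ∑ k : Fin m, A (k, p) (k, q)).det.re) ^ m := by
  have real_parts :=
    (RCLike.le_iff_re_im.mp (trace_pow_add_det_trace1_ge_det_add_det_trace2_general hA)).1
  simp only [map_add, re_pow_of_nonneg hA.trace_nonneg, Fintype.card_fin,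
    re_pow_of_nonneg (partialTraceFst_posSemidef hA).det_nonneg,
    re_pow_of_nonneg (partialTraceSnd_posSemidef hA).det_nonneg] at real_parts
  exact real_parts
end

section
/- Let A = [[A_{1,1}, A_{1,2}], [A_{2,1}, A_{2,2}]] be a positive semidefinite 2×2 block matrix with each block A_{i,j} ∈ M_n(ℂ). Then the 2×2 block matrix H = [[(tr A_{2,2})·I_n + A_{2,2}, −A_{1,2} − (tr A_{1,2})·I_n], [−A_{2,1} − (tr A_{2,1})·I_n, (tr A_{1,1})·I_n + A_{1,1}]] is positive semidefinite. -/
/-!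
Let `Φ X = tr X • 1 + Xᵀ`. This map is completely positive: with `K z = E_ij + E_ji` for an
unordered pair `z = {i, j}` of distinct indices and `K z = E_ii` for `z = {i, i}`, it has the
Kraus form `Φ X = ∑ z, K z X (K z)ᴴ + ∑ i, E_ii X (E_ii)ᴴ`. So `Φ` may be applied blockwise.

Transposing `A`, exchanging its two block indices and changing the sign of the off-diagonal blocks
turns it into the positive semidefinite matrix `[[A₂₂ᵀ, -A₁₂ᵀ], [-A₂₁ᵀ, A₁₁ᵀ]]`. The matrix `H` is
its image under the blockwise `Φ`.
-/

open Matrix ComplexOrder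

section TraceAddTranspose

variable {n R : Type*} [DecidableEq n]

/-- The adjacency matrix of the single edge `z`, which may be a loop. These matrices are the main
Kraus operators of `traceAddTranspose`. -/
def edgeMatrix (R : Type*) [Zero R] [One R] (z : Sym2 n) : Matrix n n R :=
  of fun i j => if s(i, j) = z then 1 else 0

theorem isHermitian_edgeMatrix [NonAssocSemiring R] [StarRing R] (z : Sym2 n) :
    (edgeMatrix R z).IsHermitian := by
  ext i j
  simp [edgeMatrix, apply_ite star, Sym2.eq_swap]

variable [Fintype n]

/-- The map `X ↦ tr X • 1 + Xᵀ` on square matrices, which is completely positive. -/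
def traceAddTranspose [Semiring R] (X : Matrix n n R) : Matrix n n R :=
  X.trace • 1 + Xᵀ

theorem traceAddTranspose_transpose [Semiring R] (X : Matrix n n R) :
    traceAddTranspose Xᵀ = X.trace • 1 + X := by
  simp [traceAddTranspose]

theorem traceAddTranspose_neg [Ring R] (X : Matrix n n R) :
    traceAddTranspose (-X) = -traceAddTranspose X := by
  simp [traceAddTranspose, add_comm]

theorem sum_edgeMatrix_mul_mul_edgeMatrix_apply [Semiring R] (X : Matrix n n R) (i j : n) :
    (∑ z, edgeMatrix R z * X * edgeMatrix R z : Matrix n n R) i j =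
      ∑ l, ∑ k, if s(i, k) = s(l, j) then X k l else 0 := by
  simp only [Matrix.sum_apply, mul_apply, edgeMatrix, of_apply, ite_mul, mul_ite, one_mul, zero_mul,
    mul_one, mul_zero]
  rw [Finset.sum_comm]
  simp [eq_comm]

theorem traceAddTranspose_eq_sum [Semiring R] (X : Matrix n n R) :
    traceAddTranspose X = ∑ z, edgeMatrix R z * X * edgeMatrix R z +
      ∑ i, single i i 1 * X * single i i 1 := by
  simp only [single_mul_mul_single, one_mul, mul_one, sum_single_eq_diagonal]
  ext i j
  rw [Matrix.add_apply, sum_edgeMatrix_mul_mul_edgeMatrix_apply]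
  obtain rfl | hij := eq_or_ne i j
  · have same_edge_iff (k l : n) : s(i, k) = s(l, i) ↔ k = l := by
      rw [Sym2.eq_swap, Sym2.congr_left]
    simp [traceAddTranspose, same_edge_iff, trace]
  · have same_edge_iff (k l : n) : s(i, k) = s(l, j) ↔ i = l ∧ k = j := by
      simp [hij]
    simp [traceAddTranspose, same_edge_iff, ite_and, hij]

end TraceAddTranspose

section PosSemidef

variable {m n R : Type*} [PartialOrder R]

theorem posSemidef_fromBlocks_mul_mul_conjTranspose [Ring R] [StarRing R] [Fintype m] [Fintype n]
    {m' n' : Type*} [Finite m'] [Finite n']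
    {A : Matrix m m R} {B : Matrix m n R} {C : Matrix n m R} {D : Matrix n n R}
    (h : (fromBlocks A B C D).PosSemidef) (K : Matrix m' m R) (L : Matrix n' n R) :
    (fromBlocks (K * A * Kᴴ) (K * B * Lᴴ) (L * C * Kᴴ) (L * D * Lᴴ)).PosSemidef := by
  simpa [fromBlocks_multiply, fromBlocks_conjTranspose] using
    h.mul_mul_conjTranspose_same (fromBlocks K 0 0 L)

theorem posSemidef_fromBlocks_transpose_swap_neg [CommRing R] [StarRing R] [Finite m] [Finite n]
    {A : Matrix m m R} {B : Matrix m n R} {C : Matrix n m R} {D : Matrix n n R}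
    (h : (fromBlocks A B C D).PosSemidef) :
    (fromBlocks Dᵀ (-Bᵀ) (-Cᵀ) Aᵀ).PosSemidef := by
  classical
  have := Fintype.ofFinite m
  have := Fintype.ofFinite n
  have swapped : (fromBlocks Dᵀ Bᵀ Cᵀ Aᵀ).PosSemidef := by
    simpa [fromBlocks_transpose] using h.transpose.submatrix Sum.swap
  simpa using posSemidef_fromBlocks_mul_mul_conjTranspose swapped
    (1 : Matrix n n R) (-1 : Matrix m m R)

theorem posSemidef_fromBlocks_sum [Ring R] [StarRing R] [AddLeftMono R] {ι : Type*} (s : Finset ι)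
    {A : ι → Matrix m m R} {B : ι → Matrix m n R} {C : ι → Matrix n m R} {D : ι → Matrix n n R}
    (h : ∀ i ∈ s, (fromBlocks (A i) (B i) (C i) (D i)).PosSemidef) :
    (fromBlocks (∑ i ∈ s, A i) (∑ i ∈ s, B i) (∑ i ∈ s, C i) (∑ i ∈ s, D i)).PosSemidef := by
  convert posSemidef_sum s h
  ext (i | i) (j | j) <;> simp [Matrix.sum_apply]

variable [Fintype n] [DecidableEq n]

theorem posSemidef_fromBlocks_traceAddTranspose [Ring R] [StarRing R] [AddLeftMono R]
    {A B C D : Matrix n n R} (h : (fromBlocks A B C D).PosSemidef) :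
    (fromBlocks (traceAddTranspose A) (traceAddTranspose B)
      (traceAddTranspose C) (traceAddTranspose D)).PosSemidef := by
  have edges := posSemidef_fromBlocks_sum Finset.univ fun (z : Sym2 n) _ =>
    posSemidef_fromBlocks_mul_mul_conjTranspose h (edgeMatrix R z) (edgeMatrix R z)
  have loops := posSemidef_fromBlocks_sum Finset.univ fun (i : n) _ =>
    posSemidef_fromBlocks_mul_mul_conjTranspose h (single i i (1 : R)) (single i i (1 : R))
  simpa only [fromBlocks_add, (isHermitian_edgeMatrix _).eq, conjTranspose_single, star_one,
    ← traceAddTranspose_eq_sum] using edges.add loops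

theorem H_posSemidef_of_two_by_two_block_posSemidef_general
    [CommRing R] [StarRing R] [AddLeftMono R] {A11 A12 A21 A22 : Matrix n n R}
    (hA : (fromBlocks A11 A12 A21 A22).PosSemidef) :
    (fromBlocks
        (A22.trace • (1 : Matrix n n R) + A22)
        (-A12 - A12.trace • (1 : Matrix n n R))
        (-A21 - A21.trace • (1 : Matrix n n R))
        (A11.trace • (1 : Matrix n n R) + A11)).PosSemidef := by
  simpa only [traceAddTranspose_neg, traceAddTranspose_transpose, neg_add_rev,
    ← sub_eq_add_neg] using
    posSemidef_fromBlocks_traceAddTranspose (posSemidef_fromBlocks_transpose_swap_neg hA)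

end PosSemidef

/-- Inequality (8) in the proof of Proposition 2.2: if the 2×2 block matrix
`[[A₁₁, A₁₂], [A₂₁, A₂₂]]` (with `n×n` complex blocks) is positive semidefinite, then so is
`H = [[(tr A₂₂)I + A₂₂, -A₁₂ - (tr A₁₂)I], [-A₂₁ - (tr A₂₁)I, (tr A₁₁)I + A₁₁]]`. -/
theorem H_posSemidef_of_two_by_two_block_posSemidef
    (n : ℕ) (A11 A12 A21 A22 : Matrix (Fin n) (Fin n) ℂ)
    (hA : (Matrix.fromBlocks A11 A12 A21 A22).PosSemidef) :
    (Matrix.fromBlocks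
        (A22.trace • (1 : Matrix (Fin n) (Fin n) ℂ) + A22)
        (-A12 - A12.trace • (1 : Matrix (Fin n) (Fin n) ℂ))
        (-A21 - A21.trace • (1 : Matrix (Fin n) (Fin n) ℂ))
        (A11.trace • (1 : Matrix (Fin n) (Fin n) ℂ) + A11)).PosSemidef :=
  H_posSemidef_of_two_by_two_block_posSemidef_general hA
end

section
/- Let A = [A_{i,j}]_{i,j=1}^m ∈ M_m(M_n) be positive semidefinite. Then the block matrix [Φ(A_{i,j})]_{i,j=1}^m, where Φ(X) = (tr X)·I_n + X, is also positive semidefinite. (That is, the map Φ(X) = (tr X)I + X is m-positive for every m, i.e., completely positive.) -/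
open Matrix BigOperators ComplexOrder

/-!
Writing `tr₂ A = [tr A_{i,j}]` for the partial trace, `[Φ(A_{i,j})] = tr₂ A ⊗ I + A`. The matrix
`tr₂ A` is a sum of principal submatrices of `A`, one for each index of the second factor, and
`tr₂ A ⊗ I` is a direct sum of copies of `tr₂ A`. So both summands inherit positive
semidefiniteness from `A`.
-/

section PartialTrace

variable {m n R : Type*} [Fintype n] [AddCommMonoid R]

/-- The partial trace of a block matrix over the second tensor factor: the blocks are indexed by
the first coordinate, and each block is replaced by its trace. -/
def partialTraceRight (A : Matrix (m × n) (m × n) R) : Matrix m m R :=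
  of fun i j => ∑ r, A (i, r) (j, r)

theorem partialTraceRight_eq_sum_blockDiag (A : Matrix (m × n) (m × n) R) :
    partialTraceRight A = ∑ r, blockDiag A r := by
  ext i j
  simp [partialTraceRight, Matrix.sum_apply, blockDiag_apply]

end PartialTrace

section PosSemidef

open scoped Kronecker

variable {m n R : Type*} [Ring R] [PartialOrder R] [StarRing R] [IsOrderedAddMonoid R]

theorem posSemidef_blockDiagonal [DecidableEq n] {M : n → Matrix m m R}
    (hM : ∀ k, (M k).PosSemidef) : (blockDiagonal M).PosSemidef := by
  refine ⟨isHermitian_blockDiagonal_iff.2 fun k => (hM k).isHermitian, fun x => ?_⟩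
  -- The `k`-th block only meets the part of `x` supported on `m × {k}`, which is `y k`.
  let y : n →₀ m →₀ R := (x.equivMapDomain (Equiv.prodComm m n)).curry
  have sum_eq (f : m × n → R → R) :
      x.sum f = y.sum fun k v => v.sum fun i a => f (i, k) a := by
    rw [Finsupp.sum_curry_index _ fun k i => f (i, k), Finsupp.sum_equivMapDomain]
    rfl
  have row_eq {k : n} (hk : k ∈ y.support) (i : m) (a : R) :
      (x.sum fun q b => star a * blockDiagonal M (i, k) q * b) =
        (y k).sum fun j b => star a * M k i j * b := by
    rw [sum_eq, Finsupp.sum, Finset.sum_eq_single_of_mem k hk]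
    · simp only [blockDiagonal_apply_eq]
    · intro l _ hl
      simp [blockDiagonal_apply_ne M _ _ hl.symm]
  calc
    0 ≤ y.sum fun k v => v.sum fun i a => v.sum fun j b => star a * M k i j * b :=
      Finsupp.sum_nonneg fun k _ => (hM k).2 (y k)
    _ = y.sum fun k v => v.sum fun i a => x.sum fun q b =>
          star a * blockDiagonal M (i, k) q * b :=
      Finsupp.sum_congr fun k hk => Finsupp.sum_congr fun i _ => (row_eq hk i _).symm
    _ = x.sum fun p a => x.sum fun q b => star a * blockDiagonal M p q * b :=
      (sum_eq fun p a => x.sum fun q b => star a * blockDiagonal M p q * b).symm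

theorem posSemidef_kronecker_one [DecidableEq n] {B : Matrix m m R} (hB : B.PosSemidef) :
    (B ⊗ₖ (1 : Matrix n n R)).PosSemidef := by
  rw [kronecker_one]
  exact posSemidef_blockDiagonal fun _ => hB

variable [Fintype n] {A : Matrix (m × n) (m × n) R}

theorem posSemidef_partialTraceRight (hA : A.PosSemidef) : (partialTraceRight A).PosSemidef := by
  rw [partialTraceRight_eq_sum_blockDiag]
  exact posSemidef_sum _ fun r _ => hA.submatrix (·, r)

theorem phi_block_apply_posSemidef_general [DecidableEq n] (hA : A.PosSemidef) :
    (partialTraceRight A ⊗ₖ (1 : Matrix n n R) + A).PosSemidef :=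
  (posSemidef_kronecker_one (posSemidef_partialTraceRight hA)).add hA

end PosSemidef

/-- The map `Φ(X) = (tr X)·I + X` is completely positive (`m`-positive for every `m`):
if `A = [A_{i,j}] ∈ M_m(M_n)` is positive semidefinite, then so is the block matrix
`[Φ(A_{i,j})]_{i,j=1}^m`. -/
theorem phi_block_apply_posSemidef
    (m n : ℕ) (A : Matrix (Fin m × Fin n) (Fin m × Fin n) ℂ)
    (hA : A.PosSemidef) :
    (Matrix.of fun p q : Fin m × Fin n =>
      (∑ r : Fin n, A (p.1, r) (q.1, r)) * (1 : Matrix (Fin n) (Fin n) ℂ) p.2 q.2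
        + A p q).PosSemidef :=
  phi_block_apply_posSemidef_general hA
end

section
/- Let A = [A_{i,j}]_{i,j=1}^m ∈ M_m(M_n) be positive semidefinite. Then the block matrix [Φ(A_{j,i})]_{i,j=1}^m, where Φ(X) = (tr X)·I_n + X, is also positive semidefinite. (That is, the map Φ(X) = (tr X)I + X is m-copositive for every m, i.e., completely copositive.) -/
open Matrix BigOperators ComplexOrder

/-!
The map `X ↦ (tr X) • 1 + Xᵀ` is completely positive, because it has the Kraus decomposition
`(tr X) • 1 + Xᵀ = 2⁻¹ ∑ r, ∑ s, Kᵣₛᴴ X Kᵣₛ` with `Kᵣₛ = Eᵣₛ + Eₛᵣ`; equivalently, its Choi matrix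
`1 + swap` is twice the projection onto the symmetric tensors. On the other hand, evaluating a map
`f` at the blocks `A j i` is the same as evaluating `X ↦ f Xᵀ` at the blocks of the positive
semidefinite matrix `Aᵀ`.
-/

open scoped Kronecker in
theorem comp_map_conjTranspose_mul_mul {m n k R : Type*} [Semiring R] [StarRing R]
    [Fintype m] [DecidableEq m] [Fintype n] (V : Matrix n k R)
    (A : Matrix (m × n) (m × n) R) :
    comp m m k k R (((comp m m n n R).symm A).map fun X => Vᴴ * X * V) =
      ((1 : Matrix m m R) ⊗ₖ V)ᴴ * A * ((1 : Matrix m m R) ⊗ₖ V) := by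
  ext p q
  simp [Matrix.mul_apply, Fintype.sum_prod_type, Matrix.one_apply, apply_ite star]

section BlockPositive

variable {m n k ι R : Type*} [Ring R] [PartialOrder R] [StarRing R]

/-- `m`-positivity of a map `f` between matrix spaces: applying `f` to each block of a positive
semidefinite `m × m` block matrix gives a positive semidefinite matrix. The size `m` is an index
type, so that `IsBlockPositive (Fin m) f` is `m`-positivity for a natural number `m`. -/
def IsBlockPositive (m : Type*) (f : Matrix n n R → Matrix k k R) : Prop :=
  ∀ A : Matrix (m × n) (m × n) R, A.PosSemidef →
    (comp m m k k R (((comp m m n n R).symm A).map f)).PosSemidef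

/-- `m`-copositivity of a map `f` between matrix spaces: as `IsBlockPositive`, but with the block
`(i, j)` of the image equal to the value of `f` at the block `(j, i)`. The blocks themselves are
not transposed. -/
def IsBlockCopositive (m : Type*) (f : Matrix n n R → Matrix k k R) : Prop :=
  ∀ A : Matrix (m × n) (m × n) R, A.PosSemidef →
    (comp m m k k R (((comp m m n n R).symm A)ᵀ.map f)).PosSemidef

theorem IsBlockPositive.sum [AddLeftMono R] {f : ι → Matrix n n R → Matrix k k R} (s : Finset ι)
    (hf : ∀ i ∈ s, IsBlockPositive m (f i)) : IsBlockPositive m fun X => ∑ i ∈ s, f i X := by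
  intro A hA
  convert posSemidef_sum s fun i hi => hf i hi A hA
  ext p q
  simp [Matrix.sum_apply]

theorem IsBlockPositive.smul {α : Type*} [CommSemiring α] [PartialOrder α] [StarRing α]
    [StarOrderedRing α] [Algebra α R] [StarModule α R] [PosSMulMono α R]
    {f : Matrix n n R → Matrix k k R} (hf : IsBlockPositive m f) {a : α} (ha : 0 ≤ a) :
    IsBlockPositive m fun X => a • f X :=
  fun A hA => (hf A hA).smul ha

theorem isBlockPositive_conjTranspose_mul_mul [Finite m] [Fintype n] [Finite k]
    (V : Matrix n k R) : IsBlockPositive m fun X : Matrix n n R => Vᴴ * X * V := by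
  classical
  cases nonempty_fintype m
  intro A hA
  rw [comp_map_conjTranspose_mul_mul]
  exact hA.conjTranspose_mul_mul_same _

end BlockPositive

theorem isBlockCopositive_iff_isBlockPositive_transpose {m n k R : Type*} [CommRing R]
    [PartialOrder R] [StarRing R] {f : Matrix n n R → Matrix k k R} :
    IsBlockCopositive m f ↔ IsBlockPositive m fun X => f Xᵀ :=
  ⟨fun hf A hA => hf Aᵀ hA.transpose, fun hf A hA => hf Aᵀ hA.transpose⟩

section Kraus

variable {n R : Type*} [Fintype n] [DecidableEq n] [Semiring R]

theorem single_add_single_mul_mul_same (X : Matrix n n R) (r s : n) :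
    (single r s 1 + single s r 1) * X * (single r s 1 + single s r 1) =
      single r s (X s r) + single r r (X s s) + single s s (X r r) + single s r (X r s) := by
  simp only [add_mul, mul_add, single_mul_mul_single, one_mul, mul_one]
  abel

theorem sum_sum_single_diag (X : Matrix n n R) :
    ∑ r, ∑ s, single r r (X s s) = X.trace • (1 : Matrix n n R) := by
  ext p q
  simp [Matrix.sum_apply, Matrix.one_apply, single_apply, trace, ite_and]

theorem sum_single_add_single_mul_mul_same (X : Matrix n n R) :
    ∑ r, ∑ s, (single r s 1 + single s r 1) * X * (single r s 1 + single s r 1) =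
      (2 : R) • (X.trace • 1 + Xᵀ) := by
  have sum_transpose : ∑ r, ∑ s, single r s (X s r) = Xᵀ := sum_sum_single _
  simp only [single_add_single_mul_mul_same, Finset.sum_add_distrib]
  rw [Finset.sum_comm (f := fun r s => single s s (X r r)),
    Finset.sum_comm (f := fun r s => single s r (X r s)), sum_transpose, sum_sum_single_diag,
    two_smul]
  abel

end Kraus

theorem invOf_two_nonneg {R : Type*} [Ring R] [PartialOrder R] [StarRing R] [StarOrderedRing R]
    [Invertible (2 : R)] : 0 ≤ ⅟(2 : R) := by
  have h : star (⅟(2 : R)) * 2 * ⅟2 = ⅟2 := by simp [star_invOf]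
  exact h ▸ star_left_conjugate_nonneg zero_le_two _

section TraceMap

variable {m n R : Type*} [Finite m] [Fintype n] [DecidableEq n] [CommRing R] [PartialOrder R]
  [StarRing R] [StarOrderedRing R] [Invertible (2 : R)]

theorem isBlockPositive_trace_smul_one_add_transpose :
    IsBlockPositive m fun X : Matrix n n R => X.trace • 1 + Xᵀ := by
  let K (r s : n) : Matrix n n R := single r s 1 + single s r 1
  have K_conjTranspose (r s : n) : (K r s)ᴴ = K r s := by simp [K, add_comm]
  have kraus (X : Matrix n n R) :
      X.trace • 1 + Xᵀ = ⅟(2 : R) • ∑ r, ∑ s, (K r s)ᴴ * X * K r s := by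
    simp only [K_conjTranspose, K, sum_single_add_single_mul_mul_same, invOf_smul_smul]
  simp only [kraus]
  exact .smul (.sum _ fun r _ => .sum _ fun s _ =>
    isBlockPositive_conjTranspose_mul_mul (K r s)) invOf_two_nonneg

theorem phi_block_transpose_apply_posSemidef_general :
    IsBlockCopositive m fun X : Matrix n n R => X.trace • 1 + X := by
  simpa only [isBlockCopositive_iff_isBlockPositive_transpose, trace_transpose] using
    isBlockPositive_trace_smul_one_add_transpose

end TraceMap

/-- **Lemma 2.1** (essentially): the map `Φ(X) = (tr X)·I + X` is completely copositive
(`m`-copositive for every `m`): if `A = [A_{i,j}] ∈ M_m(M_n)` is positive semidefinite,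
then the block matrix `[Φ(A_{j,i})]_{i,j=1}^m` is positive semidefinite. -/
theorem phi_block_transpose_apply_posSemidef
    (m n : ℕ) (A : Matrix (Fin m × Fin n) (Fin m × Fin n) ℂ)
    (hA : A.PosSemidef) :
    (Matrix.of fun p q : Fin m × Fin n =>
      (∑ r : Fin n, A (q.1, r) (p.1, r)) * (1 : Matrix (Fin n) (Fin n) ℂ) p.2 q.2
        + A (q.1, p.2) (p.1, q.2)).PosSemidef := by
  exact phi_block_transpose_apply_posSemidef_general A hA
end

section
/- Let X, Y, W, Z ∈ M_ℓ(ℂ) be positive semidefinite matrices. If X + Y ≥ W + Z (Löwner ordering), X ≥ W, and X ≥ Z, then det X + det Y ≥ det W + det Z. -/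
open Matrix ComplexOrder

/-!
If `0 ≤ S ≤ T` and `T` is positive definite, a congruence turns `T` into `1` and `S` into a
diagonal matrix with entries in `[0, 1]`. Since a product of such entries is at most each of them,
`S.det • T ≤ T.det • S`. Applied to `W ≤ X` and `Z ≤ X`, this shows that
`det X < det W + det Z` is only possible when `S := W + Z - X` is positive semidefinite.

In that case `S ≤ Y`, and it remains to see that `det W - det S ≤ det X - det Z`: adding
`B := X - Z` to `Z` increases the determinant at least as much as adding it to `S ≤ Z`. After the
congruence for the pair `S ≤ Z`, both increments have the form `det (M + diagonal d) - ∏ i, d i`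
with `M` congruent to `B`. Such an increment is a sum over the nonempty principal minors of `M`,
all nonnegative, with products of the `d i` as coefficients, hence it is monotone in `d ≥ 0`.
-/

section

open scoped MatrixOrder

variable {n R 𝕜 : Type*} [CommRing R] [RCLike 𝕜]

theorem le_or_gt_of_nonneg {a b : 𝕜} (ha : 0 ≤ a) (hb : 0 ≤ b) : a ≤ b ∨ b < a := by
  obtain ⟨x, -, rfl⟩ := RCLike.nonneg_iff_exists_ofReal.mp ha
  obtain ⟨y, -, rfl⟩ := RCLike.nonneg_iff_exists_ofReal.mp hb
  simpa only [RCLike.ofReal_le_ofReal, RCLike.ofReal_lt_ofReal] using le_or_gt x y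

theorem posDef_of_le {S T : Matrix n n 𝕜} (hS : S.PosDef) (hST : S ≤ T) : T.PosDef := by
  simpa only [add_sub_cancel] using hS.add_posSemidef hST

variable [Fintype n] [DecidableEq n]

theorem det_add_diagonal (M : Matrix n n R) (d : n → R) :
    (M + diagonal d).det =
      ∑ s : Finset n, (∏ i ∈ sᶜ, d i) * (M.submatrix (↑) (↑) : Matrix s s R).det := by
  refine (detRowAlternating.map_add_univ M.row (diagonal d).row).trans
    (Finset.sum_congr rfl fun s _ => ?_)
  have scale_rows : s.piecewise M.row (diagonal d).row =
      fun i => sᶜ.piecewise d 1 i • s.piecewise M.row (1 : Matrix n n R).row i := by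
    ext i j
    by_cases hi : i ∈ s <;> simp [hi, diagonal_apply, one_apply]
  rw [scale_rows, AlternatingMap.map_smul_univ, ← det_piecewise_one_eq_submatrix_det, smul_eq_mul,
    Finset.prod_piecewise, Finset.univ_inter]
  simp only [Pi.one_apply, Finset.prod_const_one, mul_one]
  rfl

theorem det_conjTranspose_mul_mul [StarRing R] (Q M : Matrix n n R) :
    (Qᴴ * M * Q).det = star Q.det * Q.det * M.det := by
  rw [det_mul, det_mul, det_conjTranspose, mul_right_comm]

theorem exists_eq_conjTranspose_mul_mul [StarRing R] {Q : Matrix n n R} (hQ : IsUnit Q)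
    (M : Matrix n n R) : ∃ N, M = Qᴴ * N * Q := by
  obtain ⟨u, rfl⟩ := hQ
  refine ⟨star (↑u⁻¹ : Matrix n n R) * M * (↑u⁻¹ : Matrix n n R), ?_⟩
  rw [← star_eq_conjTranspose, ← mul_assoc, ← mul_assoc, ← star_mul, mul_assoc, Units.inv_mul,
    mul_one, star_one, one_mul]

theorem exists_simultaneous_diagonalization {S T : Matrix n n 𝕜} (hS : S.IsHermitian)
    (hT : T.PosDef) :
    ∃ (Q : Matrix n n 𝕜) (d : n → 𝕜), IsUnit Q ∧ S = Qᴴ * diagonal d * Q ∧ T = Qᴴ * Q := by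
  obtain ⟨P, hP, rfl⟩ :=
    CStarAlgebra.isStrictlyPositive_iff_eq_star_mul_self.mp hT.isStrictlyPositive
  obtain ⟨N, rfl⟩ := exists_eq_conjTranspose_mul_mul hP S
  have hN : N.IsHermitian := hP.isSelfAdjoint_conjugate_iff'.mp hS
  let U := hN.eigenvectorUnitary
  refine ⟨star (U : Matrix n n 𝕜) * P, RCLike.ofReal ∘ hN.eigenvalues,
    (Unitary.isUnit_coe (U := star U)).mul hP, ?_, ?_⟩
  · conv_lhs => rw [hN.spectral_theorem, Unitary.conjStarAlgAut_apply]
    simp only [U, ← star_eq_conjTranspose, star_mul, star_star, mul_assoc]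
  · rw [← star_eq_conjTranspose, star_mul, star_star, mul_assoc, ← mul_assoc (U : Matrix n n 𝕜),
      Unitary.mul_star_self_of_mem U.2, one_mul]

theorem exists_simultaneous_diagonalization_of_le {S T : Matrix n n 𝕜} (hS : S.PosSemidef)
    (hT : T.PosDef) (hST : S ≤ T) :
    ∃ (Q : Matrix n n 𝕜) (d : n → 𝕜), IsUnit Q ∧ 0 ≤ d ∧ d ≤ 1 ∧
      S = Qᴴ * diagonal d * Q ∧ T = Qᴴ * Q := by
  obtain ⟨Q, d, hQ, rfl, rfl⟩ := exists_simultaneous_diagonalization hS.isHermitian hT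
  have sub_eq : Qᴴ * Q - Qᴴ * diagonal d * Q = Qᴴ * diagonal (fun i => 1 - d i) * Q := by
    rw [← diagonal_sub, diagonal_one, mul_sub, sub_mul, mul_one]
  rw [le_iff, sub_eq] at hST
  refine ⟨Q, d, hQ, ?_, fun i => sub_nonneg.mp ?_, rfl, rfl⟩
  · exact posSemidef_diagonal_iff.mp (hQ.posSemidef_star_left_conjugate_iff.mp hS)
  · exact posSemidef_diagonal_iff.mp (hQ.posSemidef_star_left_conjugate_iff.mp hST) i

theorem det_le_det_of_le {S T : Matrix n n 𝕜} (hS : S.PosSemidef) (hST : S ≤ T) :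
    S.det ≤ T.det := by
  by_cases hdet : S.det = 0
  · rw [hdet]
    exact (hS.nonneg.trans hST).posSemidef.det_nonneg
  have hT := posDef_of_le (hS.posDef_iff_det_ne_zero.mpr hdet) hST
  obtain ⟨Q, d, -, hd₀, hd₁, rfl, rfl⟩ := exists_simultaneous_diagonalization_of_le hS hT hST
  rw [det_conjTranspose_mul_mul, det_diagonal, det_mul, det_conjTranspose]
  exact mul_le_of_le_one_right (star_mul_self_nonneg _)
    (Finset.prod_le_one (fun i _ => hd₀ i) fun i _ => hd₁ i)

theorem det_smul_le_det_smul {S T : Matrix n n 𝕜} (hS : S.PosSemidef) (hST : S ≤ T) :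
    S.det • T ≤ T.det • S := by
  by_cases hdet : S.det = 0
  · rw [hdet, zero_smul]
    exact (hS.smul (hS.nonneg.trans hST).posSemidef.det_nonneg).nonneg
  have hT := posDef_of_le (hS.posDef_iff_det_ne_zero.mpr hdet) hST
  obtain ⟨Q, d, -, hd₀, hd₁, rfl, rfl⟩ := exists_simultaneous_diagonalization_of_le hS hT hST
  have prod_le (i : n) : ∏ j, d j ≤ d i := by
    rw [← Finset.mul_prod_erase _ _ (Finset.mem_univ i)]
    exact mul_le_of_le_one_right (hd₀ i)
      (Finset.prod_le_one (fun j _ => hd₀ j) fun j _ => hd₁ j)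
  have sub_eq : (Qᴴ * Q).det • (Qᴴ * diagonal d * Q) - (Qᴴ * diagonal d * Q).det • (Qᴴ * Q) =
      (Qᴴ * Q).det • (Qᴴ * diagonal (fun i => d i - ∏ j, d j) * Q) := by
    rw [← diagonal_sub, ← smul_one_eq_diagonal (∏ j, d j), mul_sub, sub_mul, smul_sub,
      det_conjTranspose_mul_mul, det_diagonal, det_mul, det_conjTranspose, mul_smul_comm,
      smul_mul_assoc, mul_one, smul_smul]
  rw [le_iff, sub_eq]
  refine PosSemidef.smul ?_ hT.posSemidef.det_nonneg
  exact (PosSemidef.diagonal fun i => sub_nonneg.mpr (prod_le i)).conjTranspose_mul_mul_same Q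

theorem det_add_diagonal_sub_prod_mono {M : Matrix n n 𝕜} (hM : M.PosSemidef) {d e : n → 𝕜}
    (hd : 0 ≤ d) (hde : d ≤ e) :
    (M + diagonal d).det - ∏ i, d i ≤ (M + diagonal e).det - ∏ i, e i := by
  have split (f : n → 𝕜) : (M + diagonal f).det - ∏ i, f i = ∑ s ∈ Finset.univ.erase ∅,
      (∏ i ∈ sᶜ, f i) * (M.submatrix (↑) (↑) : Matrix s s 𝕜).det := by
    rw [det_add_diagonal, ← Finset.add_sum_erase _ _ (Finset.mem_univ ∅)]
    simp
  rw [split, split]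
  gcongr with s _ i
  · exact (hM.submatrix _).det_nonneg
  · exact fun i _ => hd i
  · exact hde i

theorem det_add_sub_det_mono {S T B : Matrix n n 𝕜} (hS : S.PosSemidef) (hST : S ≤ T)
    (hB : B.PosSemidef) : (S + B).det - S.det ≤ (T + B).det - T.det := by
  have hT : T.PosSemidef := (hS.nonneg.trans hST).posSemidef
  by_cases hdet : T.det = 0
  · rw [hdet, sub_zero, sub_le_iff_le_add]
    exact (det_le_det_of_le (hS.add hB) (add_le_add_left hST B)).trans
      (le_add_of_nonneg_right hS.det_nonneg)
  obtain ⟨Q, d, hQ, hd₀, hd₁, rfl, rfl⟩ :=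
    exists_simultaneous_diagonalization_of_le hS (hT.posDef_iff_det_ne_zero.mpr hdet) hST
  obtain ⟨M, rfl⟩ := exists_eq_conjTranspose_mul_mul hQ B
  have hM : M.PosSemidef := hQ.posSemidef_star_left_conjugate_iff.mp hB
  have det_sub_det (e : n → 𝕜) : (Qᴴ * diagonal e * Q + Qᴴ * M * Q).det -
      (Qᴴ * diagonal e * Q).det = star Q.det * Q.det * ((M + diagonal e).det - ∏ i, e i) := by
    rw [← add_mul, ← mul_add, add_comm, det_conjTranspose_mul_mul, det_conjTranspose_mul_mul,
      det_diagonal, mul_sub]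
  have conj_one : Qᴴ * Q = Qᴴ * diagonal 1 * Q := by rw [Pi.one_def, diagonal_one, mul_one]
  rw [conj_one, det_sub_det, det_sub_det]
  exact mul_le_mul_of_nonneg_left (det_add_diagonal_sub_prod_mono hM hd₀ hd₁)
    (star_mul_self_nonneg _)

theorem le_add_of_det_lt_det_add_det {W X Z : Matrix n n 𝕜} (hW : W.PosSemidef)
    (hZ : Z.PosSemidef) (hWX : W ≤ X) (hZX : Z ≤ X) (hdet : X.det < W.det + Z.det) :
    X ≤ W + Z := by
  have hX : X.PosSemidef := (hW.nonneg.trans hWX).posSemidef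
  have hX_pos : 0 < X.det := by
    refine hX.det_nonneg.lt_of_ne' fun h => hdet.not_ge ?_
    rw [h]
    exact add_nonpos (h ▸ det_le_det_of_le hW hWX) (h ▸ det_le_det_of_le hZ hZX)
  have smul_le : X.det • X ≤ X.det • (W + Z) :=
    calc X.det • X ≤ (W.det + Z.det) • X := by
          rw [le_iff, ← sub_smul]
          exact hX.smul (sub_nonneg.mpr hdet.le)
      _ = W.det • X + Z.det • X := add_smul ..
      _ ≤ X.det • W + X.det • Z :=
          add_le_add (det_smul_le_det_smul hW hWX) (det_smul_le_det_smul hZ hZX)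
      _ = X.det • (W + Z) := (smul_add ..).symm
  rw [le_iff] at smul_le ⊢
  rw [← smul_sub] at smul_le
  simpa only [inv_smul_smul₀ hX_pos.ne'] using smul_le.smul (inv_nonneg.mpr hX_pos.le)

theorem det_add_det_ge_of_loewner_general {X Y W Z : Matrix n n 𝕜} (hY : Y.PosSemidef)
    (hW : W.PosSemidef) (hZ : Z.PosSemidef) (hWZ : W + Z ≤ X + Y) (hWX : W ≤ X) (hZX : Z ≤ X) :
    W.det + Z.det ≤ X.det + Y.det := by
  have hX : X.PosSemidef := (hW.nonneg.trans hWX).posSemidef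
  rcases le_or_gt_of_nonneg (add_nonneg hW.det_nonneg hZ.det_nonneg) hX.det_nonneg with
    hdet | hdet
  · exact hdet.trans (le_add_of_nonneg_right hY.det_nonneg)
  have hS : (W + Z - X).PosSemidef := le_add_of_det_lt_det_add_det hW hZ hWX hZX hdet
  have hSZ : W + Z - X ≤ Z := sub_le_iff_le_add.mpr (add_comm Z X ▸ add_le_add_left hWX Z)
  have hSY : W + Z - X ≤ Y := sub_le_iff_le_add'.mpr hWZ
  have increment_le : W.det - (W + Z - X).det ≤ X.det - Z.det := by
    simpa only [sub_add_sub_cancel, add_sub_cancel, add_sub_cancel_right] using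
      det_add_sub_det_mono hS hSZ hZX
  calc W.det + Z.det ≤ X.det + (W + Z - X).det := sub_le_sub_iff.mp increment_le
    _ ≤ X.det + Y.det := add_le_add_right (det_le_det_of_le hS hSY) X.det

end

/-- **Lemma 2.3** (Lin): if `X, Y, W, Z` are positive semidefinite `ℓ×ℓ` complex matrices with
`X + Y ≥ W + Z`, `X ≥ W` and `X ≥ Z` in the Löwner ordering, then
`det X + det Y ≥ det W + det Z`. -/
theorem det_add_det_ge_of_loewner
    (ℓ : ℕ) (X Y W Z : Matrix (Fin ℓ) (Fin ℓ) ℂ)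
    (hX : X.PosSemidef) (hY : Y.PosSemidef) (hW : W.PosSemidef) (hZ : Z.PosSemidef)
    (h1 : (X + Y - (W + Z)).PosSemidef)
    (h2 : (X - W).PosSemidef)
    (h3 : (X - Z).PosSemidef) :
    W.det.re + Z.det.re ≤ X.det.re + Y.det.re :=
  (Complex.le_def.mp (det_add_det_ge_of_loewner_general hY hW hZ h1 h2 h3)).1
end

section
/- Let A, B, C ∈ M_n(ℂ) be positive semidefinite. Then det(A + B + C) + det C ≥ det(A + C) + det(B + C). -/
open Matrix ComplexOrder

/-!
The inequality says that the mixed second difference of `det` at `C` in the directions `A` and `B`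
is nonnegative. At a positive definite base point these differences telescope in each direction, so
it is enough to take `A = u uᴴ` and `B = v vᴴ`. For `U = [u v]`, the matrix determinant lemma then
identifies the second difference at `M` with `det M * det (Uᴴ M⁻¹ U) ≥ 0`. A singular `C` is a limit
of positive definite matrices.
-/

theorem mul_eq_vecMulVec_add_vecMulVec_fin_two {m n R : Type*} [NonUnitalNonAssocSemiring R]
    (U : Matrix m (Fin 2) R) (V : Matrix (Fin 2) n R) :
    U * V = vecMulVec (U.col 0) (V.row 0) + vecMulVec (U.col 1) (V.row 1) := by
  ext i j
  simp [mul_apply, vecMulVec_apply]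

section CommRing

variable {n R : Type*} [Fintype n] [DecidableEq n] [CommRing R]

theorem det_add_vecMulVec {M : Matrix n n R} (hM : IsUnit M.det) (u v : n → R) :
    (M + vecMulVec u v).det = M.det * (1 + v ⬝ᵥ M⁻¹ *ᵥ u) := by
  rw [vecMulVec_eq Unit, det_add_replicateCol_mul_replicateRow hM, det_unique (n := Unit),
    Matrix.mul_assoc, ← replicateCol_mulVec]
  simp [replicateRow_mul_replicateCol_apply]

theorem det_add_mul_add_det_fin_two {M : Matrix n n R} (hM : IsUnit M.det)
    (U : Matrix n (Fin 2) R) (V : Matrix (Fin 2) n R) :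
    (M + U * V).det + M.det =
      (M + vecMulVec (U.col 0) (V.row 0)).det + (M + vecMulVec (U.col 1) (V.row 1)).det +
        M.det * (V * M⁻¹ * U).det := by
  have diag_entry (i : Fin 2) : V.row i ⬝ᵥ M⁻¹ *ᵥ U.col i = (V * M⁻¹ * U) i i := by
    rw [Matrix.mul_assoc]
    rfl
  rw [det_add_mul U V hM, det_add_vecMulVec hM, det_add_vecMulVec hM, diag_entry, diag_entry,
    det_fin_two, det_fin_two]
  simp only [Matrix.add_apply, one_apply_eq, one_apply_ne zero_ne_one, one_apply_ne one_ne_zero]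
  ring

end CommRing

section RCLike

variable {n 𝕜 : Type*} [RCLike 𝕜]

theorem posSemidef_induction [Finite n] {P : Matrix n n 𝕜 → Prop}
    (vecMulVec_self_star : ∀ v, P (vecMulVec v (star v)))
    (add : ∀ A B, A.PosSemidef → B.PosSemidef → P A → P B → P (A + B))
    {A : Matrix n n 𝕜} (hA : A.PosSemidef) : P A := by
  obtain ⟨k, v, rfl⟩ := posSemidef_iff_eq_sum_vecMulVec.mp hA
  have zero : P 0 := by simpa using vecMulVec_self_star 0
  refine (Finset.sum_induction _ (fun A ↦ A.PosSemidef ∧ P A) ?_ ⟨.zero, zero⟩ ?_).2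
  · exact fun A B hA hB ↦ ⟨hA.1.add hB.1, add A B hA.1 hB.1 hA.2 hB.2⟩
  · exact fun i _ ↦ ⟨posSemidef_vecMulVec_self_star (v i), vecMulVec_self_star (v i)⟩

theorem posSemidef_mem_closure_posDef [Finite n] {A : Matrix n n 𝕜} (hA : A.PosSemidef) :
    A ∈ closure {M : Matrix n n 𝕜 | M.PosDef} := by
  classical
  have shift_posDef : Set.MapsTo (fun t : ℝ ↦ A + t • (1 : Matrix n n 𝕜)) (Set.Ioi 0)
      {M | M.PosDef} := fun t ht ↦ PosDef.posSemidef_add hA (PosDef.one.smul ht)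
  have zero_mem : (0 : ℝ) ∈ closure (Set.Ioi 0) := by simp
  simpa using map_mem_closure (by fun_prop) zero_mem shift_posDef

variable [Fintype n] [DecidableEq n]

/-- Nonnegativity of the mixed second difference of `det` in the directions `A` and `B` at every
positive definite base point `M`. Base points are kept positive definite, rather than semidefinite,
so that `M⁻¹` is available when `A` and `B` have rank one. -/
def DetSupermodular (A B : Matrix n n 𝕜) : Prop :=
  ∀ ⦃M : Matrix n n 𝕜⦄, M.PosDef → (M + A).det + (M + B).det ≤ (M + A + B).det + M.det

namespace DetSupermodular

variable {A A₁ A₂ B : Matrix n n 𝕜}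

theorem symm (h : DetSupermodular A B) : DetSupermodular B A := by
  intro M hM
  rw [add_comm (M + B).det, add_right_comm M]
  exact h hM

theorem add_left (hA₁ : A₁.PosSemidef) (h₁ : DetSupermodular A₁ B) (h₂ : DetSupermodular A₂ B) :
    DetSupermodular (A₁ + A₂) B := by
  intro M hM
  have at_M := h₁ hM
  have at_M_add := h₂ (hM.add_posSemidef hA₁)
  rw [← add_assoc M]
  linear_combination at_M + at_M_add

theorem vecMulVec_self_star (u v : n → 𝕜) :
    DetSupermodular (vecMulVec u (star u)) (vecMulVec v (star v)) := by
  intro M hM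
  let U : Matrix n (Fin 2) 𝕜 := (of ![u, v])ᵀ
  have gram_posSemidef : (Uᴴ * M⁻¹ * U).PosSemidef :=
    hM.inv.posSemidef.conjTranspose_mul_mul_same U
  have mul_conjTranspose : U * Uᴴ = vecMulVec u (star u) + vecMulVec v (star v) :=
    mul_eq_vecMulVec_add_vecMulVec_fin_two U Uᴴ
  have second_difference :
      (M + U * Uᴴ).det + M.det =
        (M + vecMulVec u (star u)).det + (M + vecMulVec v (star v)).det +
          M.det * (Uᴴ * M⁻¹ * U).det :=
    det_add_mul_add_det_fin_two hM.det_pos.ne'.isUnit U Uᴴ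
  rw [add_assoc M, ← mul_conjTranspose, second_difference]
  exact le_add_of_nonneg_right (mul_nonneg hM.det_pos.le gram_posSemidef.det_nonneg)

theorem of_posSemidef_left (hA : A.PosSemidef)
    (h : ∀ u : n → 𝕜, DetSupermodular (vecMulVec u (star u)) B) : DetSupermodular A B :=
  posSemidef_induction (P := (DetSupermodular · B)) h (fun _ _ hA₁ _ ↦ add_left hA₁) hA

theorem of_posSemidef (hA : A.PosSemidef) (hB : B.PosSemidef) : DetSupermodular A B :=
  of_posSemidef_left hA fun u ↦ symm <| of_posSemidef_left hB fun v ↦ vecMulVec_self_star v u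

end DetSupermodular

theorem det_add_add_add_det_ge_general {A B C : Matrix n n 𝕜}
    (hA : A.PosSemidef) (hB : B.PosSemidef) (hC : C.PosSemidef) :
    (A + C).det + (B + C).det ≤ (A + B + C).det + C.det := by
  have lhs_continuous : Continuous fun M : Matrix n n 𝕜 ↦ (M + A).det + (M + B).det := by fun_prop
  have rhs_continuous : Continuous fun M : Matrix n n 𝕜 ↦ (M + A + B).det + M.det := by fun_prop
  rw [add_comm A C, add_comm B C, add_comm (A + B) C, ← add_assoc C]
  exact le_on_closure (fun M hM ↦ DetSupermodular.of_posSemidef hA hB hM)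
    lhs_continuous.continuousOn rhs_continuous.continuousOn (posSemidef_mem_closure_posDef hC)

end RCLike

/-- For positive semidefinite `n×n` complex matrices `A, B, C`,
`det(A + B + C) + det C ≥ det(A + C) + det(B + C)`. -/
theorem det_add_add_add_det_ge
    (n : ℕ) (A B C : Matrix (Fin n) (Fin n) ℂ)
    (hA : A.PosSemidef) (hB : B.PosSemidef) (hC : C.PosSemidef) :
    (A + C).det.re + (B + C).det.re ≤ (A + B + C).det.re + C.det.re := by
  simpa only [Complex.add_re] using (Complex.le_def.mp (det_add_add_add_det_ge_general hA hB hC)).1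
end

section
/- Let A be a positive semidefinite complex block matrix in M_m(M_n). Then (tr A)^{mn} + det A ≥ (det(tr₁ A))^m + (det(tr₂ A))^n, where tr₁ A = Σ_{i=1}^m A_{i,i} ∈ M_n is the first partial trace and tr₂ A = [tr A_{i,j}]_{i,j=1}^m ∈ M_m is the second partial trace. -/
open Matrix BigOperators ComplexOrder

/-!
Both partial traces are positive semidefinite with the same trace `t` as `A`, and AM-GM for the
eigenvalues gives `N ^ N * det M ≤ (tr M) ^ N` for a positive semidefinite `M` of size `N`. If
`m, n ≥ 2`, then `2 ≤ N ^ N` for both sizes, so `det (tr₁ A) ^ m` and `det (tr₂ A) ^ n` are each at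
most half of `t ^ (m * n)`, while `det A ≥ 0`. If `m` or `n` is at most `1`, equality holds.
-/

theorem card_pow_card_mul_prod_le_sum_pow_card {ι : Type*} (s : Finset ι) (x : ι → ℝ)
    (hx : ∀ i ∈ s, 0 ≤ x i) :
    (s.card : ℝ) ^ s.card * ∏ i ∈ s, x i ≤ (∑ i ∈ s, x i) ^ s.card := by
  rcases s.eq_empty_or_nonempty with rfl | hs
  · simp
  have hcard : 0 < (s.card : ℝ) := by exact_mod_cast hs.card_pos
  have hprod : 0 ≤ ∏ i ∈ s, x i := Finset.prod_nonneg hx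
  have amgm : (∏ i ∈ s, x i) ^ (s.card : ℝ)⁻¹ ≤ (∑ i ∈ s, x i) / s.card := by
    simpa using Real.geom_mean_le_arith_mean s (fun _ => 1) x (by simp) (by simpa using hs) hx
  calc (s.card : ℝ) ^ s.card * ∏ i ∈ s, x i
      = (s.card * (∏ i ∈ s, x i) ^ (s.card : ℝ)⁻¹) ^ s.card := by
        rw [mul_pow, Real.rpow_inv_natCast_pow hprod hs.card_pos.ne']
    _ ≤ (∑ i ∈ s, x i) ^ s.card := by
        gcongr
        rwa [le_div_iff₀' hcard] at amgm

section PartialTrace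

variable {ι κ R : Type*}

/-- The first partial trace of a block matrix: the sum of its diagonal blocks. The first component
of an index in `ι × κ` selects the block, the second one the entry inside the block. -/
def partialTrace₁ [Fintype ι] [AddCommMonoid R] (A : Matrix (ι × κ) (ι × κ) R) : Matrix κ κ R :=
  of fun p q => ∑ i, A (i, p) (i, q)

/-- The second partial trace of a block matrix: the matrix of the traces of its blocks, indexed as
for `partialTrace₁`. -/
def partialTrace₂ [Fintype κ] [AddCommMonoid R] (A : Matrix (ι × κ) (ι × κ) R) : Matrix ι ι R :=
  of fun i j => ∑ p, A (i, p) (j, p)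

theorem partialTrace₁_submatrix_swap [Fintype κ] [AddCommMonoid R]
    (A : Matrix (ι × κ) (ι × κ) R) :
    partialTrace₁ (A.submatrix Prod.swap Prod.swap) = partialTrace₂ A :=
  rfl

theorem partialTrace₂_submatrix_swap [Fintype ι] [AddCommMonoid R]
    (A : Matrix (ι × κ) (ι × κ) R) :
    partialTrace₂ (A.submatrix Prod.swap Prod.swap) = partialTrace₁ A :=
  rfl

theorem trace_partialTrace₁ [Fintype ι] [Fintype κ] [AddCommMonoid R]
    (A : Matrix (ι × κ) (ι × κ) R) : (partialTrace₁ A).trace = A.trace :=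
  (Fintype.sum_prod_type_right fun x : ι × κ => A x x).symm

theorem trace_partialTrace₂ [Fintype ι] [Fintype κ] [AddCommMonoid R]
    (A : Matrix (ι × κ) (ι × κ) R) : (partialTrace₂ A).trace = A.trace :=
  (Fintype.sum_prod_type fun x : ι × κ => A x x).symm

theorem posSemidef_partialTrace₁ [Fintype ι] [Ring R] [PartialOrder R] [StarRing R]
    [AddLeftMono R] {A : Matrix (ι × κ) (ι × κ) R} (hA : A.PosSemidef) :
    (partialTrace₁ A).PosSemidef := by
  have sum_blocks : partialTrace₁ A = ∑ i, A.submatrix (Prod.mk i) (Prod.mk i) := by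
    ext p q
    simp [partialTrace₁, Matrix.sum_apply]
  rw [sum_blocks]
  exact posSemidef_sum _ fun i _ => hA.submatrix (Prod.mk i)

theorem posSemidef_partialTrace₂ [Fintype κ] [Ring R] [PartialOrder R] [StarRing R]
    [AddLeftMono R] {A : Matrix (ι × κ) (ι × κ) R} (hA : A.PosSemidef) :
    (partialTrace₂ A).PosSemidef :=
  partialTrace₁_submatrix_swap A ▸ posSemidef_partialTrace₁ (hA.submatrix Prod.swap)

theorem det_partialTrace₁_of_unique [Fintype ι] [Unique ι] [Fintype κ] [DecidableEq ι]
    [DecidableEq κ] [CommRing R] (A : Matrix (ι × κ) (ι × κ) R) :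
    (partialTrace₁ A).det = A.det := by
  have single_block : partialTrace₁ A =
      A.submatrix (Equiv.uniqueProd κ ι).symm (Equiv.uniqueProd κ ι).symm := by
    ext p q
    simp [partialTrace₁]
  rw [single_block, det_submatrix_equiv_self]

theorem det_partialTrace₂_of_unique [Fintype ι] [Unique ι] [Fintype κ] [DecidableEq ι]
    [CommRing R] (A : Matrix (ι × κ) (ι × κ) R) : (partialTrace₂ A).det = A.trace := by
  rw [det_unique, ← trace_partialTrace₂, trace, Fintype.sum_unique, diag_apply]

end PartialTrace

section RCLike

variable {𝕜 ι κ : Type*} [RCLike 𝕜] [Fintype ι] [Fintype κ] [DecidableEq ι] [DecidableEq κ]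

theorem card_pow_card_mul_det_le_trace_pow_card {M : Matrix ι ι 𝕜} (hM : M.PosSemidef) :
    (Fintype.card ι : ℝ) ^ Fintype.card ι * RCLike.re M.det ≤
      RCLike.re M.trace ^ Fintype.card ι := by
  rw [hM.isHermitian.det_eq_prod_eigenvalues, hM.isHermitian.trace_eq_sum_eigenvalues]
  rw [← RCLike.ofReal_prod, ← RCLike.ofReal_sum, RCLike.ofReal_re, RCLike.ofReal_re]
  exact card_pow_card_mul_prod_le_sum_pow_card _ _ fun i _ => hM.eigenvalues_nonneg i

theorem re_det_nonneg {M : Matrix ι ι 𝕜} (hM : M.PosSemidef) : 0 ≤ RCLike.re M.det :=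
  (RCLike.nonneg_iff.mp hM.det_nonneg).1

theorem two_mul_det_pow_le_trace_pow [Nontrivial ι] {M : Matrix ι ι 𝕜} (hM : M.PosSemidef)
    {k : ℕ} (hk : k ≠ 0) :
    2 * RCLike.re M.det ^ k ≤ RCLike.re M.trace ^ (Fintype.card ι * k) := by
  have two_le_card : 2 ≤ Fintype.card ι := Fintype.one_lt_card
  have two_le_pow : (2 : ℝ) ≤ ((Fintype.card ι : ℝ) ^ Fintype.card ι) ^ k := by
    rw [← pow_mul]
    exact_mod_cast two_le_card.trans (Nat.le_self_pow (by positivity) _)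
  have det_nonneg : 0 ≤ RCLike.re M.det := re_det_nonneg hM
  calc 2 * RCLike.re M.det ^ k
      ≤ ((Fintype.card ι : ℝ) ^ Fintype.card ι) ^ k * RCLike.re M.det ^ k := by gcongr
    _ = ((Fintype.card ι : ℝ) ^ Fintype.card ι * RCLike.re M.det) ^ k := (mul_pow _ _ _).symm
    _ ≤ (RCLike.re M.trace ^ Fintype.card ι) ^ k := by
        gcongr
        exact card_pow_card_mul_det_le_trace_pow_card hM
    _ = RCLike.re M.trace ^ (Fintype.card ι * k) := (pow_mul _ _ _).symm

theorem det_partialTrace_pow_add_eq_of_subsingleton_left [Subsingleton ι]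
    (A : Matrix (ι × κ) (ι × κ) 𝕜) :
    RCLike.re (partialTrace₁ A).det ^ Fintype.card ι +
        RCLike.re (partialTrace₂ A).det ^ Fintype.card κ =
      RCLike.re A.trace ^ (Fintype.card ι * Fintype.card κ) + RCLike.re A.det := by
  rcases isEmpty_or_nonempty ι with _ | ⟨⟨i⟩⟩
  · simp
  · let _ : Unique ι := uniqueOfSubsingleton i
    rw [det_partialTrace₁_of_unique, det_partialTrace₂_of_unique, Fintype.card_unique, pow_one,
      one_mul, add_comm]

theorem det_partialTrace_pow_add_eq_of_subsingleton_right [Subsingleton κ]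
    (A : Matrix (ι × κ) (ι × κ) 𝕜) :
    RCLike.re (partialTrace₁ A).det ^ Fintype.card ι +
        RCLike.re (partialTrace₂ A).det ^ Fintype.card κ =
      RCLike.re A.trace ^ (Fintype.card ι * Fintype.card κ) + RCLike.re A.det := by
  have swapped :=
    det_partialTrace_pow_add_eq_of_subsingleton_left (A.submatrix Prod.swap Prod.swap)
  have det_swap : (A.submatrix Prod.swap Prod.swap).det = A.det :=
    det_submatrix_equiv_self (Equiv.prodComm κ ι) A
  rwa [← trace_partialTrace₁, partialTrace₁_submatrix_swap, partialTrace₂_submatrix_swap,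
    trace_partialTrace₂, det_swap, add_comm, mul_comm (Fintype.card κ)] at swapped

theorem trace_pow_add_det_ge_det_trace1_add_det_trace2_general
    {A : Matrix (ι × κ) (ι × κ) 𝕜} (hA : A.PosSemidef) :
    RCLike.re (partialTrace₁ A).det ^ Fintype.card ι +
        RCLike.re (partialTrace₂ A).det ^ Fintype.card κ ≤
      RCLike.re A.trace ^ (Fintype.card ι * Fintype.card κ) + RCLike.re A.det := by
  rcases subsingleton_or_nontrivial ι with _ | _
  · exact (det_partialTrace_pow_add_eq_of_subsingleton_left A).le
  rcases subsingleton_or_nontrivial κ with _ | _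
  · exact (det_partialTrace_pow_add_eq_of_subsingleton_right A).le
  have bound₁ := two_mul_det_pow_le_trace_pow (posSemidef_partialTrace₁ hA)
    (Fintype.card_ne_zero (α := ι))
  have bound₂ := two_mul_det_pow_le_trace_pow (posSemidef_partialTrace₂ hA)
    (Fintype.card_ne_zero (α := κ))
  rw [trace_partialTrace₁, mul_comm (Fintype.card κ)] at bound₁
  rw [trace_partialTrace₂] at bound₂
  linarith [re_det_nonneg hA]

end RCLike

/-- **Lin's inequality** (inequality (4) of the paper): for a positive semidefinite block
matrix `A ∈ M_m(M_n)`, `(tr A)^{mn} + det A ≥ det(tr₁ A)^m + det(tr₂ A)^n`, where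
`tr₁ A = ∑ᵢ A_{i,i}` and `tr₂ A = [tr A_{i,j}]`. -/
theorem trace_pow_add_det_ge_det_trace1_add_det_trace2
    (m n : ℕ) (A : Matrix (Fin m × Fin n) (Fin m × Fin n) ℂ)
    (hA : A.PosSemidef) :
    ((Matrix.of fun p q : Fin n => ∑ k : Fin m, A (k, p) (k, q)).det.re) ^ m
      + ((Matrix.of fun i j : Fin m => ∑ r : Fin n, A (i, r) (j, r)).det.re) ^ n
      ≤ A.trace.re ^ (m * n) + A.det.re := by
  have inequality := trace_pow_add_det_ge_det_trace1_add_det_trace2_general hA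
  rwa [Fintype.card_fin, Fintype.card_fin] at inequality
end
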